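/- For every involutive Lie algebra automorphism σ (σ ∘ σ = id) of sl₂(ℝ) × sl₂(ℝ) whose fixed-point subalgebra {x : σ(x) = x} is 3-dimensional, there exists a Lie algebra automorphism φ of sl₂(ℝ) × sl₂(ℝ) such that φ ∘ σ ∘ φ⁻¹ is the swap automorphism (X, Y) ↦ (Y, X); in particular the (−1)-eigenspace of σ is the image under φ⁻¹ of {(X, −X) : X ∈ sl₂(ℝ)}. -/

import Mathlib

open Matrix

/-- The componentwise Lie bracket on a product of Lie rings. -/
instance prodLieRing (L M : Type*) [LieRing L] [LieRing M] : LieRing (L × M) where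
  bracket p q := (⁅p.1, q.1⁆, ⁅p.2, q.2⁆)
  add_lie x y z := by
    show (⁅x.1 + y.1, z.1⁆, ⁅x.2 + y.2, z.2⁆)
      = (⁅x.1, z.1⁆, ⁅x.2, z.2⁆) + (⁅y.1, z.1⁆, ⁅y.2, z.2⁆)
    simp [add_lie, Prod.ext_iff]
  lie_add x y z := by
    show (⁅x.1, y.1 + z.1⁆, ⁅x.2, y.2 + z.2⁆)
      = (⁅x.1, y.1⁆, ⁅x.2, y.2⁆) + (⁅x.1, z.1⁆, ⁅x.2, z.2⁆)
    simp [lie_add, Prod.ext_iff]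
  lie_self x := by
    show (⁅x.1, x.1⁆, ⁅x.2, x.2⁆) = (0 : L × M)
    simp [Prod.ext_iff]
  leibniz_lie x y z := by
    show (⁅x.1, ⁅y.1, z.1⁆⁆, ⁅x.2, ⁅y.2, z.2⁆⁆)
      = (⁅⁅x.1, y.1⁆, z.1⁆, ⁅⁅x.2, y.2⁆, z.2⁆) + (⁅y.1, ⁅x.1, z.1⁆⁆, ⁅y.2, ⁅x.2, z.2⁆⁆)
    simp [Prod.ext_iff]

/-- The product of two Lie algebras, with the componentwise bracket. -/
instance prodLieAlgebra (R L M : Type*) [CommRing R] [LieRing L] [LieRing M]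
    [LieAlgebra R L] [LieAlgebra R M] : LieAlgebra R (L × M) where
  lie_smul t x y := by
    show (⁅x.1, t • y.1⁆, ⁅x.2, t • y.2⁆) = t • (⁅x.1, y.1⁆, ⁅x.2, y.2⁆)
    simp [Prod.ext_iff]

attribute [local instance 100] LieRing.ofAssociativeRing

/-- `sl₂(ℝ)`, the Lie algebra of traceless real 2×2 matrices. -/
abbrev sl2R : LieSubalgebra ℝ (Matrix (Fin 2) (Fin 2) ℝ) :=
  LieAlgebra.SpecialLinear.sl (Fin 2) ℝ


/-- The antidiagonal `{(X, −X)}` of `sl₂(ℝ) × sl₂(ℝ)`, as a real subspace. -/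
def mAntidiag : Submodule ℝ (sl2R × sl2R) :=
  LinearMap.range (LinearMap.prod LinearMap.id (-LinearMap.id))

namespace Aux14

def mk (a b c : ℝ) : sl2R := ⟨!![a, b; c, -a], by
  show Matrix.trace (!![a, b; c, -a] : Matrix (Fin 2) (Fin 2) ℝ) = 0
  simp [Matrix.trace_fin_two]⟩

lemma eq_mk (x : sl2R) : x = mk (x.1 0 0) (x.1 0 1) (x.1 1 0) := by
  have h : Matrix.trace x.1 = 0 := x.2
  rw [Matrix.trace_fin_two] at h
  apply Subtype.ext
  ext i j
  fin_cases i <;> fin_cases j <;> simp [mk]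
  linarith

lemma mk_add (a b c a' b' c' : ℝ) : mk a b c + mk a' b' c' = mk (a + a') (b + b') (c + c') := by
  apply Subtype.ext
  ext i j
  fin_cases i <;> fin_cases j <;> simp [mk]
  ring

lemma mk_smul (r a b c : ℝ) : r • mk a b c = mk (r * a) (r * b) (r * c) := by
  apply Subtype.ext
  ext i j
  fin_cases i <;> fin_cases j <;> simp [mk]

lemma mk_lie (a b c a' b' c' : ℝ) : ⁅mk a b c, mk a' b' c'⁆ =
    mk (b * c' - c * b') (2 * (a * b' - b * a')) (-2 * (a * c' - c * a')) := by
  apply Subtype.ext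
  rw [LieAlgebra.SpecialLinear.sl_bracket]
  ext i j
  fin_cases i <;> fin_cases j <;> simp [mk, Matrix.mul_apply, Fin.sum_univ_two] <;> ring

lemma mk_inj {a b c a' b' c' : ℝ} (h : mk a b c = mk a' b' c') : a = a' ∧ b = b' ∧ c = c' := by
  have h := congrArg Subtype.val h
  exact ⟨by simpa [mk] using congrFun (congrFun h 0) 0,
    by simpa [mk] using congrFun (congrFun h 0) 1, by simpa [mk] using congrFun (congrFun h 1) 0⟩

lemma mk_zero : mk 0 0 0 = 0 := by
  apply Subtype.ext
  ext i j
  fin_cases i <;> fin_cases j <;> simp [mk]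

def eqv : sl2R ≃ₗ[ℝ] (Fin 3 → ℝ) where
  toFun x := ![x.1 0 0, x.1 0 1, x.1 1 0]
  invFun v := mk (v 0) (v 1) (v 2)
  map_add' x y := by ext i; fin_cases i <;> simp
  map_smul' r x := by ext i; fin_cases i <;> simp
  left_inv x := by simpa using (eq_mk x).symm
  right_inv v := by ext i; fin_cases i <;> simp [mk]

instance : Module.Finite ℝ sl2R := Module.Finite.equiv eqv.symm

lemma finrank_sl : Module.finrank ℝ sl2R = 3 := by
  rw [eqv.finrank_eq]; simp

lemma decomp (a b c : ℝ) : mk a b c = a • mk 1 0 0 + b • mk 0 1 0 + c • mk 0 0 1 := by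
  simp [mk_smul, mk_add]

/-- A bracket-preserving linear map out of `sl₂` is injective or zero. -/
lemma inj_or_zero (A : sl2R →ₗ[ℝ] sl2R) (hA : ∀ x y, A ⁅x, y⁆ = ⁅A x, A y⁆) :
    Function.Injective A ∨ A = 0 := by
  by_cases hi : Function.Injective A
  · exact Or.inl hi
  right
  rw [← LinearMap.ker_eq_bot, Submodule.eq_bot_iff] at hi
  push Not at hi
  obtain ⟨x, hx, hx0⟩ := hi
  rw [LinearMap.mem_ker] at hx
  have L : ∀ u v, A v = 0 → A ⁅u, v⁆ = 0 := fun u v h => by rw [hA, h, lie_zero]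
  have S : ∀ (r : ℝ) (v), r ≠ 0 → A (r • v) = 0 → A v = 0 := fun r v hr h => by
    rw [map_smul] at h; exact (smul_eq_zero.1 h).resolve_left hr
  have fin : A (mk 1 0 0) = 0 → A = 0 := by
    intro h
    have he : A (mk 0 1 0) = 0 := by
      apply S (-2) _ (by norm_num)
      have := L (mk 0 1 0) _ h
      rw [mk_lie] at this; rw [mk_smul]; convert this using 2; norm_num
    have hf : A (mk 0 0 1) = 0 := by
      apply S 2 _ (by norm_num)
      have := L (mk 0 0 1) _ h
      rw [mk_lie] at this; rw [mk_smul]; convert this using 2; norm_num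
    ext1 y
    rw [eq_mk y, decomp]
    simp only [map_add, map_smul, h, he, hf]
    simp
  rw [eq_mk x] at hx hx0
  generalize x.1 0 0 = a at *
  generalize x.1 0 1 = b at *
  generalize x.1 1 0 = c at *
  apply fin
  by_cases hc : c = 0
  · by_cases hb : b = 0
    · subst hc hb
      have ha : a ≠ 0 := by rintro rfl; exact hx0 mk_zero
      apply S a _ ha
      rw [mk_smul]; simpa using hx
    · apply S (b * (-2)) _ (by simpa using hb)
      have h2 := L (mk 0 1 0) _ (L (mk 0 0 1) _ (L (mk 0 0 1) _ hx))
      rw [mk_lie, mk_lie, mk_lie] at h2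
      rw [mk_smul]; convert h2 using 2; subst hc; congr 1 <;> ring
  · apply S (c * 2) _ (by simpa using hc)
    have h2 := L (mk 0 0 1) _ (L (mk 0 1 0) _ (L (mk 0 1 0) _ hx))
    rw [mk_lie, mk_lie, mk_lie] at h2
    rw [mk_smul]; convert h2 using 2; congr 1 <;> ring

lemma center (y : sl2R) (h : ∀ x : sl2R, ⁅x, y⁆ = 0) : y = 0 := by
  have h1 := h (mk 1 0 0)
  have h2 := h (mk 0 1 0)
  rw [eq_mk y, mk_lie, ← mk_zero] at h1 h2
  obtain ⟨-, h3, h4⟩ := mk_inj h1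
  obtain ⟨-, h5, -⟩ := mk_inj h2
  rw [eq_mk y, ← mk_zero]
  congr 1 <;> linarith

lemma trace_eq (A : sl2R →ₗ[ℝ] sl2R) : LinearMap.trace ℝ _ A =
    (A (mk 1 0 0)).1 0 0 + (A (mk 0 1 0)).1 0 1 + (A (mk 0 0 1)).1 1 0 := by
  rw [LinearMap.trace_eq_matrix_trace ℝ (Module.Basis.ofEquivFun eqv), Matrix.trace,
    Fin.sum_univ_three]
  simp [LinearMap.toMatrix_apply, eqv]

lemma trace_sq (A : sl2R →ₗ[ℝ] sl2R) (hA : ∀ x y, A ⁅x, y⁆ = ⁅A x, A y⁆)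
    (h2 : ∀ x, A (A x) = x) :
    LinearMap.trace ℝ _ A = 3 ∨ LinearMap.trace ℝ _ A = -1 := by
  rw [trace_eq]
  have e1 := hA (mk 1 0 0) (mk 0 1 0)
  have e2 := hA (mk 1 0 0) (mk 0 0 1)
  have e3 := hA (mk 0 1 0) (mk 0 0 1)
  have i1 := h2 (mk 1 0 0)
  have i2 := h2 (mk 0 1 0)
  have i3 := h2 (mk 0 0 1)
  rw [mk_lie, decomp] at e1 e2 e3
  simp only [map_add, map_smul] at e1 e2 e3
  generalize hh : A (mk 1 0 0) = u at *
  generalize he : A (mk 0 1 0) = v at *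
  generalize hf : A (mk 0 0 1) = w at *
  rw [eq_mk u, decomp] at i1
  rw [eq_mk v, decomp] at i2
  rw [eq_mk w, decomp] at i3
  simp only [map_add, map_smul, hh, he, hf] at i1 i2 i3
  rw [eq_mk u, eq_mk v, eq_mk w] at e1 e2 e3 i1 i2 i3
  generalize u.1 0 0 = a1 at *
  generalize u.1 0 1 = b1 at *
  generalize u.1 1 0 = c1 at *
  generalize v.1 0 0 = a2 at *
  generalize v.1 0 1 = b2 at *
  generalize v.1 1 0 = c2 at *
  generalize w.1 0 0 = a3 at *
  generalize w.1 0 1 = b3 at *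
  generalize w.1 1 0 = c3 at *
  simp only [mk_smul, mk_add, mk_lie] at e1 e2 e3 i1 i2 i3
  obtain ⟨-, e1, -⟩ := mk_inj e1
  obtain ⟨-, -, e2⟩ := mk_inj e2
  obtain ⟨e3, -, -⟩ := mk_inj e3
  replace i1 := (mk_inj i1).1
  replace i2 := (mk_inj i2).2.1
  replace i3 := (mk_inj i3).2.2
  simp [mk] at i1 i2 i3
  have : (a1 + b2 + c3 - 3) * (a1 + b2 + c3 + 1) = 0 := by
    linear_combination i1 + i2 + i3 - e1 + e2 - 2 * e3
  rcases mul_eq_zero.1 this with h | h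
  · left; linarith
  · right; linarith

end Aux14

open Aux14 in
/-- every involutive Lie algebra automorphism `σ` of `sl₂(ℝ) × sl₂(ℝ)` with
3-dimensional fixed-point subalgebra is conjugate, by some automorphism `φ`, to the swap
`(X, Y) ↦ (Y, X)`; in particular its `(−1)`-eigenspace is the image under `φ⁻¹` of
`{(X, −X) : X ∈ sl₂(ℝ)}`. -/
theorem stmt_14 (σ : (sl2R × sl2R) ≃ₗ⁅ℝ⁆ (sl2R × sl2R))
    (hinv : ∀ x, σ (σ x) = x)
    (hdim : Module.finrank ℝ
      (LinearMap.ker (σ.toLieHom.toLinearMap - LinearMap.id)) = 3) :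
    ∃ φ : (sl2R × sl2R) ≃ₗ⁅ℝ⁆ (sl2R × sl2R),
      (∀ p : sl2R × sl2R, φ (σ (φ.symm p)) = (p.2, p.1)) ∧
      LinearMap.ker (σ.toLieHom.toLinearMap + LinearMap.id) =
        Submodule.map φ.symm.toLieHom.toLinearMap mAntidiag := by
  set s : (sl2R × sl2R) →ₗ[ℝ] (sl2R × sl2R) := σ.toLieHom.toLinearMap with hs
  have sap : ∀ p, s p = σ p := fun _ => rfl
  have lie_def : ∀ p q : sl2R × sl2R, ⁅p, q⁆ = (⁅p.1, q.1⁆, ⁅p.2, q.2⁆) := fun _ _ => rfl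
  have slie : ∀ p q, s ⁅p, q⁆ = ⁅s p, s q⁆ := fun p q => LieHom.map_lie σ.toLieHom p q
  let A := LinearMap.fst ℝ sl2R sl2R ∘ₗ s ∘ₗ LinearMap.inl ℝ sl2R sl2R
  let B := LinearMap.snd ℝ sl2R sl2R ∘ₗ s ∘ₗ LinearMap.inl ℝ sl2R sl2R
  let C := LinearMap.fst ℝ sl2R sl2R ∘ₗ s ∘ₗ LinearMap.inr ℝ sl2R sl2R
  let D := LinearMap.snd ℝ sl2R sl2R ∘ₗ s ∘ₗ LinearMap.inr ℝ sl2R sl2R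
  have sl : ∀ x, s (x, 0) = (A x, B x) := fun _ => rfl
  have sr : ∀ x, s (0, x) = (C x, D x) := fun _ => rfl
  have sxy : ∀ x y, s (x, y) = (A x + C y, B x + D y) := fun x y => by
    have : (x, y) = (x, 0) + ((0, y) : sl2R × sl2R) := by simp
    rw [this, map_add, sl, sr]; rfl
  have ll : ∀ x y : sl2R, (⁅x, y⁆, (0 : sl2R)) = ⁅((x, 0) : sl2R × sl2R), (y, 0)⁆ := fun x y => by
    rw [lie_def]; simp
  have rr : ∀ x y : sl2R, ((0 : sl2R), ⁅x, y⁆) = ⁅((0, x) : sl2R × sl2R), (0, y)⁆ := fun x y => by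
    rw [lie_def]; simp
  have hl : ∀ x y, (A ⁅x, y⁆, B ⁅x, y⁆) = (⁅A x, A y⁆, ⁅B x, B y⁆) := fun x y => by
    rw [← sl, ll, slie, sl, sl, lie_def]
  have hr : ∀ x y, (C ⁅x, y⁆, D ⁅x, y⁆) = (⁅C x, C y⁆, ⁅D x, D y⁆) := fun x y => by
    rw [← sr, rr, slie, sr, sr, lie_def]
  have hA : ∀ x y, A ⁅x, y⁆ = ⁅A x, A y⁆ := fun x y => (Prod.ext_iff.1 (hl x y)).1
  have hB : ∀ x y, B ⁅x, y⁆ = ⁅B x, B y⁆ := fun x y => (Prod.ext_iff.1 (hl x y)).2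
  have hC : ∀ x y, C ⁅x, y⁆ = ⁅C x, C y⁆ := fun x y => (Prod.ext_iff.1 (hr x y)).1
  have hD : ∀ x y, D ⁅x, y⁆ = ⁅D x, D y⁆ := fun x y => (Prod.ext_iff.1 (hr x y)).2
  have hcross : ∀ x y, ⁅A x, C y⁆ = 0 ∧ ⁅B x, D y⁆ = 0 := fun x y => by
    have h : ⁅((x, 0) : sl2R × sl2R), ((0, y) : sl2R × sl2R)⁆ = 0 := by
      rw [lie_def]; simp
    have h' := slie (x, 0) (0, y)
    rw [h, map_zero, sl, sr, lie_def] at h'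
    exact ⟨(Prod.ext_iff.1 h').1.symm, (Prod.ext_iff.1 h').2.symm⟩
  have sinv : ∀ p, s (s p) = p := hinv
  have surj : ∀ F : sl2R →ₗ[ℝ] sl2R, Function.Injective F → Function.Surjective F :=
    fun F h => LinearMap.surjective_of_injective h
  have ne : mk 1 0 0 ≠ 0 := fun h => by
    rw [← mk_zero] at h; exact one_ne_zero (mk_inj h).1
  rcases inj_or_zero A hA with hAi | hA0
  · exfalso
    have hC0 : C = 0 := by
      ext1 y
      apply center
      intro x
      obtain ⟨x, rfl⟩ := surj A hAi x
      exact (hcross x y).1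
    have hDi : Function.Injective D := by
      rcases inj_or_zero D hD with h | h
      · exact h
      exfalso
      have h1 := sinv (0, mk 1 0 0)
      rw [sr, hC0, h] at h1
      change s 0 = _ at h1
      rw [map_zero] at h1
      exact ne (by simpa using (Prod.ext_iff.1 h1).2.symm)
    have hB0 : B = 0 := by
      ext1 x
      apply center
      intro y
      obtain ⟨y, rfl⟩ := surj D hDi y
      rw [← lie_skew, (hcross x y).2, neg_zero]
    have sprod : s = LinearMap.prodMap A D := by
      apply LinearMap.ext
      rintro ⟨x, y⟩
      rw [sxy, hC0, hB0]; simp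
    have hA2 : ∀ x, A (A x) = x := fun x => by
      have := sinv (x, 0)
      rw [sprod] at this
      exact (Prod.ext_iff.1 this).1
    have hD2 : ∀ x, D (D x) = x := fun x => by
      have := sinv (0, x)
      rw [sprod] at this
      exact (Prod.ext_iff.1 this).2
    have tr0 : LinearMap.trace ℝ _ s = 0 := by
      have hp : LinearMap.IsProj (LinearMap.ker (s - LinearMap.id))
          ((1 / 2 : ℝ) • (s + LinearMap.id)) := by
        constructor
        · intro x
          rw [LinearMap.mem_ker]
          simp only [LinearMap.sub_apply, LinearMap.smul_apply, LinearMap.add_apply,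
            LinearMap.id_apply, map_smul, map_add, sinv]
          module
        · intro x hx
          rw [LinearMap.mem_ker, LinearMap.sub_apply, sub_eq_zero] at hx
          rw [LinearMap.smul_apply, LinearMap.add_apply, hx, LinearMap.id_apply, ← two_smul ℝ x,
            smul_smul]
          norm_num
      have h := hp.trace
      rw [hdim, map_smul, map_add, LinearMap.trace_id, Module.finrank_prod, finrank_sl] at h
      simp only [smul_eq_mul] at h
      norm_num at h
      linarith
    rw [sprod, LinearMap.trace_prodMap'] at tr0
    rcases trace_sq A hA hA2 with h | h <;> rcases trace_sq D hD hD2 with h' | h' <;>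
      rw [h, h'] at tr0 <;> norm_num at tr0
  · have hBi : Function.Injective B := by
      rcases inj_or_zero B hB with h | h
      · exact h
      exfalso
      have h1 := sinv (mk 1 0 0, 0)
      rw [sl, hA0, h] at h1
      change s 0 = _ at h1
      rw [map_zero] at h1
      exact ne (by simpa using (Prod.ext_iff.1 h1).1.symm)
    have hD0 : D = 0 := by
      ext1 y
      apply center
      intro x
      obtain ⟨x, rfl⟩ := surj B hBi x
      exact (hcross x y).2
    have sxy' : ∀ x y, σ (x, y) = (C y, B x) := fun x y => by
      rw [← sap, sxy, hA0, hD0]; simp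
    have hCB : ∀ x, C (B x) = x := fun x => by
      have := hinv (x, 0)
      rw [sxy', sxy'] at this
      exact (Prod.ext_iff.1 this).1
    have hBC : ∀ x, B (C x) = x := fun x => by
      have := hinv (0, x)
      rw [sxy', sxy'] at this
      exact (Prod.ext_iff.1 this).2
    let φ : (sl2R × sl2R) ≃ₗ⁅ℝ⁆ (sl2R × sl2R) :=
      { toFun := fun p => (p.1, C p.2)
        map_add' := fun p q => by simp
        map_smul' := fun r p => by simp
        map_lie' := fun {p q} => by
          show (⁅p, q⁆.1, C ⁅p, q⁆.2) = ⁅(p.1, C p.2), (q.1, C q.2)⁆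
          rw [lie_def, lie_def, hC]
        invFun := fun p => (p.1, B p.2)
        left_inv := fun p => by simp [hBC]
        right_inv := fun p => by simp [hCB] }
    have hφ : ∀ p, φ p = (p.1, C p.2) := fun _ => rfl
    have hφs : ∀ p, φ.symm p = (p.1, B p.2) := fun _ => rfl
    refine ⟨φ, fun p => ?_, ?_⟩
    · rw [hφs, sxy', hφ, hCB, hCB]
    · ext ⟨x, y⟩
      rw [LinearMap.mem_ker, Submodule.mem_map]
      have e : (s + (LinearMap.id : (sl2R × sl2R) →ₗ[ℝ] (sl2R × sl2R))) (x, y) = (C y + x, B x + y) := by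
        rw [LinearMap.add_apply, sap, sxy']; rfl
      rw [e]
      constructor
      · intro h
        have h2 : B x + y = 0 := (Prod.ext_iff.1 h).2
        refine ⟨(x, -x), ⟨x, rfl⟩, ?_⟩
        show (x, B (-x)) = (x, y)
        rw [map_neg, neg_eq_of_add_eq_zero_right h2]
      · rintro ⟨_, ⟨z, rfl⟩, h⟩
        have h' : (z, B (-z)) = (x, y) := h
        obtain ⟨rfl, rfl⟩ := Prod.ext_iff.1 h'
        simp [hCB]
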